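/- Let n ≥ 1, m ≥ 1 and s ∈ (0,1). For every measurable map u : 𝕊ⁿ → 𝕊^m with [u]_{W^{s,n/s}(𝕊ⁿ)} < ∞ there exists ε = ε(u) > 0 with the following property: whenever g₁, g₂ : 𝕊ⁿ → 𝕊^m are continuous maps satisfying ∫_{𝕊ⁿ} |u − g_i| dμ + [u − g_i]_{W^{s,n/s}(𝕊ⁿ)} ≤ ε for i = 1, 2, the maps g₁ and g₂ are homotopic. -/

import Mathlib

open MeasureTheory
open scoped ENNReal

noncomputable section

/-- The unit sphere `𝕊ᵏ ⊆ ℝ^{k+1}`. -/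
abbrev Sph (k : ℕ) : Type _ := ↥(Metric.sphere (0 : EuclideanSpace ℝ (Fin (k + 1))) 1)

/-- `f` and `g` are homotopic maps. -/
def Homotopic {X Y : Type*} [TopologicalSpace X] [TopologicalSpace Y] (f g : X → Y) : Prop :=
  ∃ H : unitInterval × X → Y, Continuous H ∧ (∀ x, H (0, x) = f x) ∧ (∀ x, H (1, x) = g x)

/-- The Gagliardo seminorm `[f]_{W^{σ,p}(𝕊ⁿ)}` of a map `f : 𝕊ⁿ → ℝ^{m+1}`, in `[0,∞]`;
`μH[n]` is the `n`-dimensional Hausdorff measure on `𝕊ⁿ`. -/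
def sphGagliardo (n m : ℕ) (σ p : ℝ) (f : Sph n → EuclideanSpace ℝ (Fin (m + 1))) : ℝ≥0∞ :=
  (∫⁻ x, ∫⁻ y, ENNReal.ofReal (‖f x - f y‖ ^ p / dist x y ^ ((n : ℝ) + σ * p))
      ∂(μH[(n : ℝ)] : Measure (Sph n)) ∂(μH[(n : ℝ)] : Measure (Sph n))) ^ (1 / p)

abbrev EE (k : ℕ) : Type := EuclideanSpace ℝ (Fin k)

lemma eucl_haar (n : ℕ) : (μH[(n : ℝ)] : Measure (EE n)).IsAddHaarMeasure := by
  have h := @isAddHaarMeasure_hausdorffMeasure (EE n) _ _ _ _ _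
  rwa [finrank_euclideanSpace_fin] at h

lemma sph_lower (n : ℕ) : ∃ c : ℝ, 0 < c ∧ ∀ (x : Sph n) (r : ℝ), 0 < r → r ≤ 1 →
    ENNReal.ofReal (c * r ^ n) ≤ (μH[(n : ℝ)] : Measure (Sph n)) (Metric.ball x r) := by
  have hH := eucl_haar n
  have hfin : (μH[(n : ℝ)] : Measure (EE n)) (Metric.ball 0 1) ≠ ⊤ := measure_ball_lt_top.ne
  have hpos : 0 < (μH[(n : ℝ)] : Measure (EE n)) (Metric.ball 0 1) :=
    Metric.measure_ball_pos _ _ one_pos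
  set A := ((μH[(n : ℝ)] : Measure (EE n)) (Metric.ball 0 1)).toReal with hA
  have hApos : 0 < A := ENNReal.toReal_pos hpos.ne' hfin
  refine ⟨(1/2)^n * A, by positivity, ?_⟩
  intro x r hr hr1
  have hx : ‖(x : EE (n+1))‖ = 1 := by simp
  have hx0 : (x : EE (n+1)) ≠ 0 := by
    intro h; rw [h] at hx; simp at hx
  have : Fact (Module.finrank ℝ (EE (n+1)) = n + 1) := ⟨finrank_euclideanSpace_fin⟩
  set U := (Submodule.span ℝ {(x : EE (n+1))})ᗮ with hU
  let b := (OrthonormalBasis.fromOrthogonalSpanSingleton (𝕜 := ℝ) n hx0).repr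
  let T : Sph n → EE n := fun y => b (U.orthogonalProjectionOnto (y : EE (n+1)))
  have hT : LipschitzWith 1 T := by
    refine LipschitzWith.of_dist_le_mul ?_
    intro y y'
    rw [b.dist_map, Subtype.dist_eq]
    exact (Submodule.lipschitzWith_orthogonalProjectionOnto U).dist_le_mul _ _
  have himg : Metric.ball (0 : EE n) (r/2) ⊆ T '' Metric.ball x r := by
    intro ω hω
    have hω' : ‖ω‖ < r/2 := by simpa using hω
    let w : U := b.symm ω
    have hw : ‖(w : EE (n+1))‖ = ‖ω‖ := by
      rw [← Submodule.coe_norm]; exact b.symm.norm_map ω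
    have hort : inner ℝ (x : EE (n+1)) (w : EE (n+1)) = 0 :=
      Submodule.mem_orthogonal_singleton_iff_inner_right.1 w.2
    set a := ‖ω‖ with ha
    have ha0 : 0 ≤ a := norm_nonneg _
    have ha1 : a^2 ≤ 1 := by nlinarith
    set q := Real.sqrt (1 - a^2) with hq
    have hq2 : q^2 = 1 - a^2 := Real.sq_sqrt (by linarith)
    have hq0 : 0 ≤ q := Real.sqrt_nonneg _
    have hort' : inner ℝ (w : EE (n+1)) (x : EE (n+1)) = 0 := by rw [real_inner_comm]; exact hort
    have hn1 : ‖(w : EE (n+1)) + q • (x : EE (n+1))‖^2 = 1 := by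
      rw [norm_add_sq_real, inner_smul_right, hort', norm_smul, hx, hw, Real.norm_eq_abs,
        abs_of_nonneg hq0]
      linarith
    have hn1' : ‖(w : EE (n+1)) + q • (x : EE (n+1))‖ = 1 := by
      rw [← sq_eq_sq₀ (norm_nonneg _) zero_le_one, hn1]; norm_num
    refine ⟨⟨(w : EE (n+1)) + q • (x : EE (n+1)), by simpa using hn1'⟩, ?_, ?_⟩
    · rw [Metric.mem_ball, Subtype.dist_eq, dist_eq_norm]
      have e : (w : EE (n+1)) + q • (x : EE (n+1)) - x = (w : EE (n+1)) + (q - 1) • (x : EE (n+1)) := by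
        module
      show ‖(w : EE (n+1)) + q • (x : EE (n+1)) - x‖ < r
      rw [e]
      have h2 : ‖(w : EE (n+1)) + (q-1) • (x : EE (n+1))‖^2 < r^2 := by
        rw [norm_add_sq_real, inner_smul_right, hort', norm_smul, hx, hw, Real.norm_eq_abs, mul_one,
          sq_abs]
        have : q ≤ 1 := by nlinarith
        have : q^2 ≤ q := by nlinarith
        nlinarith
      exact lt_of_pow_lt_pow_left₀ 2 hr.le h2
    · show b (U.orthogonalProjectionOnto ((w : EE (n+1)) + q • (x : EE (n+1)))) = ω
      rw [map_add, map_smul, Submodule.orthogonalProjectionOnto_mem_subspace_eq_self,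
        Submodule.orthogonalProjectionOnto_orthogonalComplement_singleton_eq_zero]
      simp [w]
  calc ENNReal.ofReal ((1/2)^n * A * r^n)
      = (μH[(n : ℝ)] : Measure (EE n)) (Metric.ball 0 (r/2)) := by
        rw [Measure.addHaar_ball_of_pos _ _ (by positivity), finrank_euclideanSpace_fin,
          ← ENNReal.ofReal_toReal hfin, ← ENNReal.ofReal_mul (by positivity), ← hA]
        congr 1
        rw [div_pow, div_pow]; ring
    _ ≤ (μH[(n : ℝ)] : Measure (EE n)) (T '' Metric.ball x r) := measure_mono himg
    _ ≤ _ := by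
        simpa using hT.hausdorffMeasure_image_le (d := (n:ℝ)) (by positivity) (Metric.ball x r)

lemma normalize_lip {E : Type*} [NormedAddCommGroup E] [InnerProductSpace ℝ E] (a b : E)
    (ha : 1 ≤ ‖a‖) (hb : 1 ≤ ‖b‖) : ‖‖a‖⁻¹ • a - ‖b‖⁻¹ • b‖ ≤ 2 * ‖a - b‖ := by
  have h0 : 0 < ‖a‖ := by linarith
  have h1 : 0 < ‖b‖ := by linarith
  have e : ‖a‖⁻¹ • a - ‖b‖⁻¹ • b = ‖a‖⁻¹ • (a - b) + (‖a‖⁻¹ * ‖b‖⁻¹ * (‖b‖ - ‖a‖)) • b := by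
    have : ‖a‖⁻¹ * ‖b‖⁻¹ * (‖b‖ - ‖a‖) = ‖a‖⁻¹ - ‖b‖⁻¹ := by field_simp
    rw [this]; module
  rw [e]
  refine (norm_add_le _ _).trans ?_
  have hi : ‖a‖⁻¹ ≤ 1 := inv_le_one_of_one_le₀ ha
  have h3 : |‖b‖ - ‖a‖| ≤ ‖a - b‖ := by
    rw [norm_sub_rev]; exact abs_norm_sub_norm_le _ _
  rw [norm_smul, norm_smul, norm_mul, norm_mul, norm_inv, norm_inv, norm_norm, norm_norm,
    Real.norm_eq_abs]
  have e2 : ‖a‖⁻¹ * ‖b‖⁻¹ * |‖b‖ - ‖a‖| * ‖b‖ = ‖a‖⁻¹ * |‖b‖ - ‖a‖| := by field_simp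
  rw [e2]
  have : ‖a‖⁻¹ * ‖a - b‖ ≤ 1 * ‖a - b‖ := by gcongr
  have : ‖a‖⁻¹ * |‖b‖ - ‖a‖| ≤ 1 * ‖a - b‖ := by gcongr
  linarith

lemma sph_finite (n : ℕ) : IsFiniteMeasure (μH[(n : ℝ)] : Measure (Sph n)) := by
  have hH := eucl_haar n
  refine ⟨isCompact_univ.measure_lt_top_of_nhdsWithin ?_⟩
  intro x _
  rw [nhdsWithin_univ]
  have hx : ‖(x : EE (n+1))‖ = 1 := by simp
  have hx0 : (x : EE (n+1)) ≠ 0 := by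
    intro h; rw [h] at hx; simp at hx
  have : Fact (Module.finrank ℝ (EE (n+1)) = n + 1) := ⟨finrank_euclideanSpace_fin⟩
  set U := (Submodule.span ℝ {(x : EE (n+1))})ᗮ with hU
  let b := (OrthonormalBasis.fromOrthogonalSpanSingleton (𝕜 := ℝ) n hx0).repr
  have hge : ∀ w : U, 1 ≤ ‖(x : EE (n+1)) + (w : EE (n+1))‖ := by
    intro w
    have hort : inner ℝ (x : EE (n+1)) (w : EE (n+1)) = 0 :=
      Submodule.mem_orthogonal_singleton_iff_inner_right.1 w.2
    have : 1 ≤ ‖(x : EE (n+1)) + (w : EE (n+1))‖^2 := by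
      rw [norm_add_sq_real, hort, hx]; nlinarith [sq_nonneg ‖(w : EE (n+1))‖]
    nlinarith [norm_nonneg ((x : EE (n+1)) + (w : EE (n+1)))]
  let P : EE n → Sph n := fun ω =>
    ⟨‖(x : EE (n+1)) + (b.symm ω : U)‖⁻¹ • ((x : EE (n+1)) + (b.symm ω : U)), by
      have := hge (b.symm ω)
      rw [mem_sphere_zero_iff_norm, norm_smul, norm_inv, norm_norm]
      exact inv_mul_cancel₀ (by linarith)⟩
  have hP : LipschitzWith 2 P := by
    refine LipschitzWith.of_dist_le_mul ?_
    intro ω ω'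
    rw [Subtype.dist_eq, dist_eq_norm]
    refine (normalize_lip _ _ (hge _) (hge _)).trans ?_
    rw [add_sub_add_left_eq_sub, ← Submodule.coe_sub, ← map_sub, ← Submodule.coe_norm, b.symm.norm_map,
      dist_eq_norm]
    norm_num
  have hfin : (μH[(n : ℝ)] : Measure (Sph n)) (P '' Metric.closedBall 0 3) < ⊤ := by
    refine (hP.hausdorffMeasure_image_le (d := (n:ℝ)) (by positivity) _).trans_lt ?_
    refine ENNReal.mul_lt_top ?_ (isCompact_closedBall _ _).measure_lt_top
    simp
  refine ⟨P '' Metric.closedBall 0 3, ?_, hfin⟩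
  have hopen : IsOpen {y : Sph n | 1/2 < inner ℝ (x : EE (n+1)) (y : EE (n+1))} :=
    isOpen_lt continuous_const (by fun_prop)
  refine Filter.mem_of_superset (hopen.mem_nhds (by
    show 1/2 < inner ℝ (x : EE (n+1)) (x : EE (n+1))
    rw [real_inner_self_eq_norm_sq, hx]; norm_num)) ?_
  intro y hy
  have hy1 : ‖(y : EE (n+1))‖ = 1 := by simp
  set t := inner ℝ (x : EE (n+1)) (y : EE (n+1)) with ht
  have hy' : 1/2 < t := hy
  have ht0 : 0 < t := by linarith
  have hmem : t⁻¹ • (y : EE (n+1)) - x ∈ U := by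
    rw [hU, Submodule.mem_orthogonal_singleton_iff_inner_right, inner_sub_right, inner_smul_right,
      real_inner_self_eq_norm_sq, hx, ← ht, inv_mul_cancel₀ ht0.ne']
    norm_num
  refine ⟨b ⟨_, hmem⟩, ?_, ?_⟩
  · rw [mem_closedBall_zero_iff, b.norm_map, Submodule.coe_norm]
    refine (norm_sub_le _ _).trans ?_
    rw [norm_smul, hy1, hx, norm_inv, Real.norm_eq_abs, abs_of_pos ht0]
    have : t⁻¹ ≤ 2 := by
      rw [inv_le_comm₀ ht0 (by norm_num)]; linarith
    linarith
  · apply Subtype.ext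
    simp only [P, LinearIsometryEquiv.symm_apply_apply]
    rw [add_sub_cancel, norm_smul, hy1, norm_inv, Real.norm_eq_abs, abs_of_pos ht0, mul_one, inv_inv,
      smul_smul, mul_inv_cancel₀ ht0.ne', one_smul]

lemma Homotopic.trans' {X Y : Type*} [TopologicalSpace X] [TopologicalSpace Y] {f g h : X → Y}
    (h1 : Homotopic f g) (h2 : Homotopic g h) : Homotopic f h := by
  obtain ⟨H, hH, a0, a1⟩ := h1
  obtain ⟨K, hK, b0, b1⟩ := h2
  have hf : Continuous f := by
    have : f = fun x => H (0, x) := by funext x; rw [a0]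
    rw [this]; fun_prop
  have hg : Continuous g := by
    have : g = fun x => H (1, x) := by funext x; rw [a1]
    rw [this]; fun_prop
  have hh : Continuous h := by
    have : h = fun x => K (1, x) := by funext x; rw [b1]
    rw [this]; fun_prop
  let H' : ContinuousMap.Homotopy (⟨f, hf⟩ : C(X, Y)) ⟨g, hg⟩ := ⟨⟨H, hH⟩, a0, a1⟩
  let K' : ContinuousMap.Homotopy (⟨g, hg⟩ : C(X, Y)) ⟨h, hh⟩ := ⟨⟨K, hK⟩, b0, b1⟩
  let M := H'.trans K'
  exact ⟨M, M.continuous, M.apply_zero, M.apply_one⟩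

lemma Homotopic.symm' {X Y : Type*} [TopologicalSpace X] [TopologicalSpace Y] {f g : X → Y}
    (h1 : Homotopic f g) : Homotopic g f := by
  obtain ⟨H, hH, a0, a1⟩ := h1
  refine ⟨fun z => H (unitInterval.symm z.1, z.2), by fun_prop, ?_, ?_⟩
  · intro x; simp [a1]
  · intro x; simp [a0]

open Classical in
/-- Radial projection to the sphere. -/
def nz (m : ℕ) (v : EE (m+1)) : Sph m :=
  if h : v = 0 then ⟨EuclideanSpace.single 0 1, by simp⟩ else ⟨‖v‖⁻¹ • v, by
    rw [mem_sphere_zero_iff_norm, norm_smul, norm_inv, norm_norm]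
    exact inv_mul_cancel₀ (norm_ne_zero_iff.2 h)⟩

lemma coe_nz (m : ℕ) (v : EE (m+1)) (h : v ≠ 0) : (nz m v : EE (m+1)) = ‖v‖⁻¹ • v := by
  simp [nz, h]

lemma nz_coe (m : ℕ) (x : Sph m) : nz m (x : EE (m+1)) = x := by
  have hx : ‖(x : EE (m+1))‖ = 1 := by simp
  have hx0 : (x : EE (m+1)) ≠ 0 := by
    intro h; rw [h] at hx; simp at hx
  apply Subtype.ext
  rw [coe_nz m _ hx0, hx]; simp

lemma continuous_nz {Z : Type*} [TopologicalSpace Z] (m : ℕ) (F : Z → EE (m+1)) (hF : Continuous F)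
    (h0 : ∀ z, F z ≠ 0) : Continuous (fun z => nz m (F z)) := by
  rw [continuous_induced_rng]
  have : (Subtype.val ∘ fun z => nz m (F z)) = fun z => ‖F z‖⁻¹ • F z := by
    funext z; exact coe_nz m _ (h0 z)
  rw [this]
  exact (hF.norm.inv₀ (fun z => norm_ne_zero_iff.2 (h0 z))).smul hF

lemma homotopic_line {X : Type*} [TopologicalSpace X] (m : ℕ) (A B : X → EE (m+1))
    (hA : Continuous A) (hB : Continuous B)
    (h0 : ∀ x, ∀ τ : ℝ, 0 ≤ τ → τ ≤ 1 → (1 - τ) • A x + τ • B x ≠ 0) :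
    Homotopic (fun x => nz m (A x)) (fun x => nz m (B x)) := by
  refine ⟨fun z => nz m ((1 - (z.1 : ℝ)) • A z.2 + (z.1 : ℝ) • B z.2),
    continuous_nz m _ (by fun_prop) (fun z => h0 _ _ z.1.2.1 z.1.2.2), ?_, ?_⟩
  · intro x; simp
  · intro x; simp

/-- Tent weight. -/
def wt {X : Type*} [MetricSpace X] (t : ℝ) (x y : X) : ℝ := max 0 (1 - dist x y / t)

/-- Weighted integral. -/
def GG {X : Type*} [MetricSpace X] [MeasurableSpace X] {E : Type*} [NormedAddCommGroup E]
    [NormedSpace ℝ E] (μ : Measure X) (g : X → E) (t : ℝ) (x : X) : E := ∫ y, wt t x y • g y ∂μ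

section avg
variable {X : Type*} [MetricSpace X]

lemma wt_nonneg (t : ℝ) (x y : X) : 0 ≤ wt t x y := le_max_left _ _

lemma wt_le_one {t : ℝ} (ht : 0 < t) (x y : X) : wt t x y ≤ 1 := by
  refine max_le zero_le_one ?_
  have : 0 ≤ dist x y / t := by positivity
  linarith

lemma wt_eq_zero {t : ℝ} (ht : 0 < t) (x y : X) (h : t ≤ dist x y) : wt t x y = 0 := by
  refine max_eq_left ?_
  have : 1 ≤ dist x y / t := by rwa [le_div_iff₀ ht, one_mul]
  linarith

lemma wt_cont (t : ℝ) (x : X) : Continuous (fun y => wt t x y) := by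
  unfold wt; fun_prop

variable [MeasurableSpace X] [CompactSpace X] [BorelSpace X] (μ : Measure X) [IsFiniteMeasure μ]

lemma integ {Y E : Type*} [TopologicalSpace Y] [CompactSpace Y] [MeasurableSpace Y]
    [OpensMeasurableSpace Y] (ν : Measure Y) [IsFiniteMeasure ν] [NormedAddCommGroup E]
    [SecondCountableTopologyEither Y E] {f : Y → E} (hf : Continuous f) : Integrable f ν :=
  hf.integrable_of_hasCompactSupport (HasCompactSupport.of_compactSpace f)

lemma GG_cont {m : ℕ} {Z : Type*} [TopologicalSpace Z] [FirstCountableTopology Z] (g : X → EE (m+1))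
    (hg : Continuous g) (hg1 : ∀ x, ‖g x‖ = 1) (t : Z → ℝ) (x : Z → X) (ht : Continuous t)
    (hx : Continuous x) (ht0 : ∀ z, 0 < t z) : Continuous (fun z => GG μ g (t z) (x z)) := by
  unfold GG
  refine continuous_of_dominated (bound := fun _ => (1 : ℝ)) ?_ ?_ (integrable_const _) ?_
  · intro z
    exact ((wt_cont (t z) (x z)).smul hg).aestronglyMeasurable
  · intro z
    refine Filter.Eventually.of_forall fun y => ?_
    rw [norm_smul, hg1, mul_one, Real.norm_eq_abs, abs_of_nonneg (wt_nonneg _ _ _)]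
    exact wt_le_one (ht0 z) _ _
  · refine Filter.Eventually.of_forall fun y => ?_
    suffices h : Continuous (fun z => wt (t z) (x z) y) from h.smul continuous_const
    unfold wt
    exact continuous_const.max (continuous_const.sub ((hx.dist continuous_const).div ht
      (fun z => (ht0 z).ne')))

lemma WW_lower {t : ℝ} (ht : 0 < t) (x : X) :
    (1/2) * μ.real (Metric.ball x (t/2)) ≤ ∫ y, wt t x y ∂μ := by
  calc (1/2) * μ.real (Metric.ball x (t/2))
      = ∫ y, (Metric.ball x (t/2)).indicator (fun _ => (1/2 : ℝ)) y ∂μ := by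
        rw [integral_indicator_const _ Metric.isOpen_ball.measurableSet, smul_eq_mul, mul_comm]
    _ ≤ _ := by
        refine integral_mono ((integrable_const _).indicator Metric.isOpen_ball.measurableSet)
          (integ μ (wt_cont t x)) ?_
        intro y
        by_cases h : y ∈ Metric.ball x (t/2)
        · simp only [Set.indicator_of_mem h]
          refine le_trans ?_ (le_max_right _ _)
          rw [Metric.mem_ball, dist_comm] at h
          have : dist x y / t ≤ 1/2 := by rw [div_le_iff₀ ht]; linarith
          linarith
        · simp only [Set.indicator_of_notMem h]; exact wt_nonneg _ _ _

lemma unit_inner {E : Type*} [NormedAddCommGroup E] [InnerProductSpace ℝ E] (a b : E)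
    (ha : ‖a‖ = 1) (hb : ‖b‖ = 1) : inner ℝ a b = 1 - ‖a - b‖^2 / 2 := by
  rw [norm_sub_sq_real, ha, hb]; ring

lemma GG_sq {m : ℕ} (g : X → EE (m+1)) (hg : Continuous g) (hg1 : ∀ x, ‖g x‖ = 1) {t p : ℝ}
    (hp : 1 ≤ p) (x : X) :
    (∫ y, wt t x y ∂μ)^2 / 2
      - 2 * ∫ z, wt t x z.1 * wt t x z.2 * ‖g z.1 - g z.2‖ ^ p ∂(μ.prod μ) ≤ ‖GG μ g t x‖^2 := by
  have hw := wt_cont t x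
  have hp0 : 0 ≤ p := by linarith
  have e1 : ‖GG μ g t x‖^2
      = ∫ z, wt t x z.1 * wt t x z.2 * inner ℝ (g z.1) (g z.2) ∂(μ.prod μ) := by
    rw [integral_prod _ (integ _ (by fun_prop)), ← real_inner_self_eq_norm_sq]
    conv_lhs => rw [GG]
    rw [real_inner_comm]
    change inner ℝ (GG μ g t x) _ = _
    rw [← integral_inner (integ μ (by fun_prop))]
    refine integral_congr_ae (Filter.Eventually.of_forall fun z => ?_)
    simp only
    rw [real_inner_comm, GG, ← integral_inner (integ μ (by fun_prop))]
    refine integral_congr_ae (Filter.Eventually.of_forall fun y => ?_)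
    simp only
    rw [real_inner_smul_left, real_inner_smul_right]; ring
  have e2 : (∫ y, wt t x y ∂μ)^2 = ∫ z, wt t x z.1 * wt t x z.2 ∂(μ.prod μ) := by
    rw [integral_prod_mul (fun y => wt t x y) (fun y => wt t x y), sq]
  have hc1 : Continuous (fun z : X × X => wt t x z.1 * wt t x z.2) := by fun_prop
  have hc2 : Continuous (fun z : X × X => wt t x z.1 * wt t x z.2 * ‖g z.1 - g z.2‖ ^ p) :=
    hc1.mul (Continuous.rpow_const (by fun_prop) (fun _ => Or.inr hp0))
  rw [e1, e2, ← integral_div, ← integral_const_mul, ← integral_sub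
    ((integ _ hc1).div_const _) ((integ _ hc2).const_mul _)]
  refine integral_mono (((integ _ hc1).div_const _).sub ((integ _ hc2).const_mul _))
    (integ _ (by fun_prop)) ?_
  intro z
  simp only
  rw [unit_inner _ _ (hg1 _) (hg1 _)]
  have hww : 0 ≤ wt t x z.1 * wt t x z.2 := mul_nonneg (wt_nonneg _ _ _) (wt_nonneg _ _ _)
  set a := ‖g z.1 - g z.2‖ with ha
  have ha0 : 0 ≤ a := norm_nonneg _
  have ha2 : a ≤ 2 := by
    refine (norm_sub_le _ _).trans ?_
    rw [hg1, hg1]; norm_num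
  have hap : a^2 ≤ 1 + 4 * a ^ p := by
    rcases le_total a 1 with h | h
    · have := Real.rpow_nonneg ha0 p
      nlinarith
    · have := Real.one_le_rpow h hp0
      nlinarith
  nlinarith

lemma near_bound {m : ℕ} (g : X → EE (m+1)) (hg : Continuous g)
    {t p q K : ℝ} (ht : 0 < t) (hp : 1 ≤ p) (hq : 0 ≤ q) (hK0 : 0 ≤ K) (x : X)
    (hK : ∫⁻ z, {z : X × X | dist z.1 z.2 < 2 * t}.indicator
      (fun z => ENNReal.ofReal (‖g z.1 - g z.2‖ ^ p / dist z.1 z.2 ^ q)) z ∂(μ.prod μ)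
        ≤ ENNReal.ofReal K) :
    ∫ z, wt t x z.1 * wt t x z.2 * ‖g z.1 - g z.2‖ ^ p ∂(μ.prod μ) ≤ (2*t)^q * K := by
  have hw := wt_cont t x
  have hp0 : 0 ≤ p := by linarith
  have hc2 : Continuous (fun z : X × X => wt t x z.1 * wt t x z.2 * ‖g z.1 - g z.2‖ ^ p) :=
    Continuous.mul (by fun_prop) (Continuous.rpow_const (by fun_prop) (fun _ => Or.inr hp0))
  have hnn : ∀ z : X × X, 0 ≤ wt t x z.1 * wt t x z.2 := fun z =>
    mul_nonneg (wt_nonneg _ _ _) (wt_nonneg _ _ _)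
  have h2t : 0 ≤ (2*t)^q := by positivity
  rw [← ENNReal.ofReal_le_ofReal_iff (by positivity), ofReal_integral_eq_lintegral_ofReal
    (integ _ hc2) (Filter.Eventually.of_forall fun z => mul_nonneg (hnn z) (by positivity)),
    ENNReal.ofReal_mul h2t]
  refine le_trans ?_ (mul_le_mul_right hK _)
  rw [← lintegral_const_mul' _ _ ENNReal.ofReal_ne_top]
  refine lintegral_mono fun z => ?_
  by_cases hz : dist z.1 z.2 < 2 * t
  · rw [Set.indicator_of_mem (by exact hz), ← ENNReal.ofReal_mul h2t]
    refine ENNReal.ofReal_le_ofReal ?_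
    have hap : 0 ≤ ‖g z.1 - g z.2‖ ^ p := by positivity
    have h1 : wt t x z.1 * wt t x z.2 * ‖g z.1 - g z.2‖ ^ p ≤ 1 * ‖g z.1 - g z.2‖ ^ p :=
      mul_le_mul_of_nonneg_right
        (mul_le_one₀ (wt_le_one ht _ _) (wt_nonneg _ _ _) (wt_le_one ht _ _)) hap
    refine h1.trans ?_
    rw [one_mul]
    rcases (dist_nonneg (x := z.1) (y := z.2)).eq_or_lt with h | h
    · have : z.1 = z.2 := dist_eq_zero.1 h.symm
      rw [this]
      simp [Real.zero_rpow (show p ≠ 0 by linarith)]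
    · have hd : 0 < dist z.1 z.2 ^ q := by positivity
      rw [← mul_div_assoc, le_div_iff₀ hd, mul_comm]
      have : dist z.1 z.2 ^ q ≤ (2*t)^q := Real.rpow_le_rpow h.le hz.le hq
      gcongr
  · have : wt t x z.1 * wt t x z.2 = 0 := by
      by_cases h1 : t ≤ dist x z.1
      · rw [wt_eq_zero ht _ _ h1, zero_mul]
      · have := dist_triangle_left z.1 z.2 x
        rw [wt_eq_zero ht x z.2 (by linarith), mul_zero]
    rw [this]; simp

lemma near_small {Y : Type*} [NormedAddCommGroup Y] [MeasurableSpace Y] [BorelSpace Y]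
    [SecondCountableTopology Y] (u : X → Y) (hu : Measurable u) {p q : ℝ} (hp : 1 ≤ p)
    (hfin : ∫⁻ z, ENNReal.ofReal (‖u z.1 - u z.2‖ ^ p / dist z.1 z.2 ^ q) ∂(μ.prod μ) ≠ ⊤)
    {κ : ℝ} (hκ : 0 < κ) : ∃ δ : ℝ, 0 < δ ∧
      ∫⁻ z, {z : X × X | dist z.1 z.2 < δ}.indicator
        (fun z => ENNReal.ofReal (‖u z.1 - u z.2‖ ^ p / dist z.1 z.2 ^ q)) z ∂(μ.prod μ)
        ≤ ENNReal.ofReal κ := by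
  set f : X × X → ℝ≥0∞ := fun z => ENNReal.ofReal (‖u z.1 - u z.2‖ ^ p / dist z.1 z.2 ^ q) with hf
  have hfm : Measurable f := by
    have : Measurable (fun z : X × X => dist z.1 z.2) := continuous_dist.measurable
    have : Measurable (fun z : X × X => ‖u z.1 - u z.2‖) := by fun_prop
    refine ENNReal.measurable_ofReal.comp ?_
    fun_prop
  have hT := tendsto_lintegral_of_dominated_convergence (μ := μ.prod μ)
    (F := fun k : ℕ => {z : X × X | dist z.1 z.2 < 1 / ((k : ℝ) + 1)}.indicator f) (f := fun _ => 0) f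
    (fun k => hfm.indicator (isOpen_lt continuous_dist continuous_const).measurableSet)
    (fun k => Filter.Eventually.of_forall fun z => Set.indicator_le_self _ _ _)
    hfin
    (Filter.Eventually.of_forall fun z => by
      rcases (dist_nonneg (x := z.1) (y := z.2)).eq_or_lt with h | h
      · have h12 : z.1 = z.2 := dist_eq_zero.1 h.symm
        have hfz : f z = 0 := by
          simp only [hf]
          rw [h12]
          simp [Real.zero_rpow (show p ≠ 0 by linarith)]
        have : (fun k : ℕ => {z : X × X | dist z.1 z.2 < 1 / ((k : ℝ) + 1)}.indicator f z)
            = fun _ => 0 := by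
          funext k
          exact Set.indicator_apply_eq_zero.2 fun _ => hfz
        rw [this]; exact tendsto_const_nhds
      · refine tendsto_const_nhds.congr' ?_
        filter_upwards [(tendsto_one_div_add_atTop_nhds_zero_nat (𝕜 := ℝ)).eventually
          (gt_mem_nhds h)] with k hk
        refine (Set.indicator_of_notMem ?_ _).symm
        simp only [Set.mem_ofPred_eq, not_lt]
        exact hk.le)
  simp only [lintegral_zero] at hT
  have hpos : (0 : ℝ≥0∞) < ENNReal.ofReal κ := ENNReal.ofReal_pos.2 hκ
  obtain ⟨k, hk⟩ := (hT.eventually (gt_mem_nhds hpos)).exists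
  exact ⟨1 / ((k : ℝ) + 1), by positivity, hk.le⟩

/-- local approximation: for a given continuous `g`, small scales are homotopic to `g`. -/
lemma GG_small {m : ℕ} (g : X → Sph m) (hg : Continuous g) {t0 : ℝ} (ht0 : 0 < t0)
    (hpos : ∀ x : X, ∀ r, 0 < r → 0 < μ (Metric.ball x r)) :
    ∃ t : ℝ, 0 < t ∧ t ≤ t0 ∧
      Homotopic g (fun x => nz m (GG μ (fun y => (g y : EE (m+1))) t x)) := by
  have huc := (CompactSpace.uniformContinuous_of_continuous hg)
  obtain ⟨δ, hδ, hδ'⟩ := Metric.uniformContinuous_iff.1 huc 1 one_pos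
  refine ⟨min δ t0, lt_min hδ ht0, min_le_right _ _, ?_⟩
  set t := min δ t0
  have ht : 0 < t := lt_min hδ ht0
  have hg1 : ∀ x, ‖(g x : EE (m+1))‖ = 1 := fun x => by simp
  have hgc : Continuous (fun x => (g x : EE (m+1))) := by fun_prop
  have e : g = fun x => nz m (g x : EE (m+1)) := by funext x; rw [nz_coe]
  conv => arg 1; rw [e]
  refine homotopic_line m _ _ hgc
    (GG_cont μ _ hgc hg1 (fun _ => t) (fun x => x) continuous_const continuous_id fun _ => ht) ?_
  intro x τ hτ0 hτ1 h0
  have hin : 0 < inner ℝ (g x : EE (m+1)) (GG μ (fun y => (g y : EE (m+1))) t x) := by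
    have hw := wt_cont t x
    have hlow := WW_lower μ ht x
    have hb : 0 < μ.real (Metric.ball x (t/2)) :=
      ENNReal.toReal_pos (hpos x _ (by positivity)).ne' (measure_ne_top _ _)
    have : (∫ y, wt t x y ∂μ) * (1/2)
        ≤ inner ℝ (g x : EE (m+1)) (GG μ (fun y => (g y : EE (m+1))) t x) := by
      rw [GG, ← integral_inner (integ μ (by fun_prop)), ← integral_mul_const]
      refine integral_mono ((integ μ hw).mul_const _) (integ μ (by fun_prop)) ?_
      intro y
      simp only
      rw [real_inner_smul_right]
      by_cases hy : t ≤ dist x y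
      · rw [wt_eq_zero ht _ _ hy]; simp
      · refine mul_le_mul_of_nonneg_left ?_ (wt_nonneg _ _ _)
        have := hδ' (a := x) (b := y) ((not_le.1 hy).trans_le (min_le_left _ _))
        rw [Subtype.dist_eq, dist_eq_norm] at this
        rw [unit_inner _ _ (hg1 _) (hg1 _)]
        nlinarith [norm_nonneg ((g x : EE (m+1)) - (g y : EE (m+1)))]
    linarith
  have h2 : inner ℝ (g x : EE (m+1)) ((1 - τ) • (g x : EE (m+1))
      + τ • GG μ (fun y => (g y : EE (m+1))) t x) = 0 := by
    rw [h0, inner_zero_right]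
  rw [inner_add_right, real_inner_smul_right, real_inner_smul_right, real_inner_self_eq_norm_sq,
    hg1] at h2
  rcases hτ0.eq_or_lt with h | h
  · rw [← h] at h2; norm_num at h2
  · nlinarith [mul_pos h hin]

lemma GG_scales {m : ℕ} (g : X → Sph m) (hg : Continuous g) {t0 t1 : ℝ} (ht1 : 0 < t1)
    (h10 : t1 ≤ t0)
    (hne : ∀ x t, 0 < t → t ≤ t0 → GG μ (fun y => (g y : EE (m+1))) t x ≠ 0) :
    Homotopic (fun x => nz m (GG μ (fun y => (g y : EE (m+1))) t1 x))
      (fun x => nz m (GG μ (fun y => (g y : EE (m+1))) t0 x)) := by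
  have hg1 : ∀ x, ‖(g x : EE (m+1))‖ = 1 := fun x => by simp
  have hgc : Continuous (fun x => (g x : EE (m+1))) := by fun_prop
  have hpos : ∀ z : unitInterval × X, 0 < t1 + (z.1 : ℝ) * (t0 - t1) := fun z => by
    have := mul_nonneg z.1.2.1 (sub_nonneg.2 h10)
    linarith
  refine ⟨fun z => nz m (GG μ (fun y => (g y : EE (m+1))) (t1 + (z.1 : ℝ) * (t0 - t1)) z.2),
    continuous_nz m _ (GG_cont μ _ hgc hg1 (fun z : unitInterval × X => t1 + (z.1 : ℝ) * (t0 - t1))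
      (fun z => z.2) (by fun_prop) (by fun_prop) hpos) (fun z => hne _ _ (hpos z) ?_), ?_, ?_⟩
  · have := mul_le_mul_of_nonneg_right z.1.2.2 (sub_nonneg.2 h10)
    linarith
  · intro x; simp
  · intro x; simp

end avg

lemma gag_eq (n m : ℕ) (σ p : ℝ) (f : Sph n → EE (m+1)) (hf : Measurable f) :
    sphGagliardo n m σ p f = (∫⁻ z, ENNReal.ofReal (‖f z.1 - f z.2‖ ^ p
      / dist z.1 z.2 ^ ((n : ℝ) + σ * p))
      ∂((μH[(n : ℝ)] : Measure (Sph n)).prod (μH[(n : ℝ)] : Measure (Sph n)))) ^ (1 / p) := by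
  have := sph_finite n
  unfold sphGagliardo
  rw [lintegral_prod]
  have : Measurable (fun z : Sph n × Sph n => dist z.1 z.2) := continuous_dist.measurable
  have : Measurable (fun z : Sph n × Sph n => ‖f z.1 - f z.2‖) := by fun_prop
  refine (ENNReal.measurable_ofReal.comp ?_).aemeasurable
  fun_prop

lemma pow_split {E : Type*} [NormedAddCommGroup E] (a b : E) {p : ℝ} (hp : 1 ≤ p) :
    ‖a‖ ^ p ≤ 2 ^ p * (‖b‖ ^ p + ‖b - a‖ ^ p) := by
  have hp0 : 0 ≤ p := by linarith
  have h1 : ‖a‖ ≤ 2 * max ‖b‖ ‖b - a‖ := by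
    have : ‖a‖ ≤ ‖b‖ + ‖b - a‖ := by
      have := norm_sub_le b (b - a)
      rwa [sub_sub_cancel] at this
    linarith [le_max_left ‖b‖ ‖b - a‖, le_max_right ‖b‖ ‖b - a‖]
  have h2 : ‖a‖ ^ p ≤ (2 * max ‖b‖ ‖b - a‖) ^ p := Real.rpow_le_rpow (norm_nonneg _) h1 hp0
  refine h2.trans ?_
  rw [Real.mul_rpow (by norm_num) (le_max_of_le_left (norm_nonneg _))]
  refine mul_le_mul_of_nonneg_left ?_ (by positivity)
  have hb : 0 ≤ ‖b‖ ^ p := by positivity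
  have hc : 0 ≤ ‖b - a‖ ^ p := by positivity
  rcases max_choice ‖b‖ ‖b - a‖ with h | h <;> rw [h] <;> linarith

lemma GG_lower (n m : ℕ) {p q κ δ K c t : ℝ} (hp : 1 ≤ p) (hq : q = ((2 * n : ℕ) : ℝ))
    (hc : 0 < c) (hδ : 2 * t ≤ δ) (ht : 0 < t) (hκ : 0 ≤ κ)
    (hK : K = 2 ^ p * (2 * κ)) (hKc : 2 * 4 ^ n * K ≤ c ^ 2 / 4)
    (μ : Measure (Sph n)) [IsFiniteMeasure μ]
    (u g : Sph n → EE (m+1)) (hu : Measurable u) (hg : Continuous g) (hg1 : ∀ x, ‖g x‖ = 1)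
    (hKu : ∫⁻ z, {z : Sph n × Sph n | dist z.1 z.2 < δ}.indicator
        (fun z => ENNReal.ofReal (‖u z.1 - u z.2‖ ^ p / dist z.1 z.2 ^ q)) z ∂(μ.prod μ)
        ≤ ENNReal.ofReal κ)
    (hug : ∫⁻ z, ENNReal.ofReal (‖(u z.1 - g z.1) - (u z.2 - g z.2)‖ ^ p / dist z.1 z.2 ^ q)
      ∂(μ.prod μ) ≤ ENNReal.ofReal κ)
    (x : Sph n) (hW : c * t ^ n ≤ ∫ y, wt t x y ∂μ) :
    c * t ^ n / 2 ≤ ‖GG μ g t x‖ := by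
  have hK0 : 0 ≤ K := by rw [hK]; positivity
  have hq0 : 0 ≤ q := by rw [hq]; positivity
  have hnear : ∫⁻ z, {z : Sph n × Sph n | dist z.1 z.2 < 2 * t}.indicator
      (fun z => ENNReal.ofReal (‖g z.1 - g z.2‖ ^ p / dist z.1 z.2 ^ q)) z ∂(μ.prod μ)
        ≤ ENNReal.ofReal K := by
    have hm : Measurable (fun z : Sph n × Sph n =>
        ENNReal.ofReal (‖(u z.1 - g z.1) - (u z.2 - g z.2)‖ ^ p / dist z.1 z.2 ^ q)) := by
      have hgm := hg.measurable
      have : Measurable (fun z : Sph n × Sph n => dist z.1 z.2) := continuous_dist.measurable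
      have : Measurable (fun z : Sph n × Sph n => ‖(u z.1 - g z.1) - (u z.2 - g z.2)‖) := by fun_prop
      refine ENNReal.measurable_ofReal.comp ?_
      fun_prop
    calc _ ≤ ∫⁻ z, ENNReal.ofReal (2 ^ p) * ({z : Sph n × Sph n | dist z.1 z.2 < δ}.indicator
        (fun z => ENNReal.ofReal (‖u z.1 - u z.2‖ ^ p / dist z.1 z.2 ^ q)) z
        + ENNReal.ofReal (‖(u z.1 - g z.1) - (u z.2 - g z.2)‖ ^ p / dist z.1 z.2 ^ q))
          ∂(μ.prod μ) := by
          refine lintegral_mono fun z => ?_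
          by_cases hz : dist z.1 z.2 < 2 * t
          · rw [Set.indicator_of_mem (by exact hz), Set.indicator_of_mem (by exact hz.trans_le hδ),
              ← ENNReal.ofReal_add (by positivity) (by positivity),
              ← ENNReal.ofReal_mul (by positivity)]
            refine ENNReal.ofReal_le_ofReal ?_
            rw [← add_div, ← mul_div_assoc]
            refine div_le_div_of_nonneg_right ?_ (by positivity)
            have := pow_split (g z.1 - g z.2) (u z.1 - u z.2) hp
            rwa [sub_sub_sub_comm] at this
          · rw [Set.indicator_of_notMem (by exact hz)]; exact zero_le
      _ ≤ ENNReal.ofReal (2 ^ p) * (ENNReal.ofReal κ + ENNReal.ofReal κ) := by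
          rw [lintegral_const_mul' _ _ ENNReal.ofReal_ne_top, lintegral_add_right _ hm]
          gcongr
      _ = ENNReal.ofReal K := by
          rw [← ENNReal.ofReal_add hκ hκ, ← ENNReal.ofReal_mul (by positivity), hK]
          congr 1; ring
  have h1 := near_bound μ g hg ht hp hq0 hK0 x hnear
  have h2 := GG_sq μ g hg hg1 (t := t) hp x
  have h3 : (2 * t) ^ q = 4 ^ n * (t ^ n) ^ 2 := by
    rw [hq, Real.rpow_natCast, pow_mul, mul_pow, ← pow_mul t, mul_comm n 2, pow_mul t, mul_pow]
    norm_num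
  rw [h3] at h1
  set W := ∫ y, wt t x y ∂μ
  have ht' : 0 < t ^ n := by positivity
  have hct : 0 < c * t ^ n := by positivity
  have h4 : 2 * (4 ^ n * (t ^ n) ^ 2 * K) ≤ (c * t ^ n) ^ 2 / 4 := by
    have := mul_le_mul_of_nonneg_right hKc (sq_nonneg (t ^ n))
    nlinarith
  have h5 : (c * t ^ n) ^ 2 ≤ W ^ 2 := pow_le_pow_left₀ hct.le hW 2
  have h6 : (c * t ^ n / 2) ^ 2 ≤ ‖GG μ g t x‖ ^ 2 := by
    have : (c * t ^ n / 2) ^ 2 = (c * t ^ n) ^ 2 / 4 := by ring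
    linarith
  exact le_of_sq_le_sq h6 (norm_nonneg _)

/-- continuous maps that are close (in `L¹` and in the `W^{s,n/s}` seminorm)
to a fixed finite-energy map `u` are all homotopic to each other. -/
theorem stmt11 (n m : ℕ) (hn : 1 ≤ n) (hm : 1 ≤ m) (s : ℝ) (hs : 0 < s) (hs1 : s < 1)
    (u : Sph n → Sph m) (hu : Measurable u)
    (huW : sphGagliardo n m s ((n : ℝ) / s)
      (fun x => (u x : EuclideanSpace ℝ (Fin (m + 1)))) < ⊤) :
    ∃ ε : ℝ, 0 < ε ∧
      ∀ g₁ g₂ : Sph n → Sph m, Continuous g₁ → Continuous g₂ →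
        ((∫⁻ x, ENNReal.ofReal
              ‖(u x : EuclideanSpace ℝ (Fin (m + 1))) - (g₁ x : EuclideanSpace ℝ (Fin (m + 1)))‖
              ∂(μH[(n : ℝ)] : Measure (Sph n)))
          + sphGagliardo n m s ((n : ℝ) / s)
              (fun x => (u x : EuclideanSpace ℝ (Fin (m + 1)))
                - (g₁ x : EuclideanSpace ℝ (Fin (m + 1))))
          ≤ ENNReal.ofReal ε) →
        ((∫⁻ x, ENNReal.ofReal
              ‖(u x : EuclideanSpace ℝ (Fin (m + 1))) - (g₂ x : EuclideanSpace ℝ (Fin (m + 1)))‖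
              ∂(μH[(n : ℝ)] : Measure (Sph n)))
          + sphGagliardo n m s ((n : ℝ) / s)
              (fun x => (u x : EuclideanSpace ℝ (Fin (m + 1)))
                - (g₂ x : EuclideanSpace ℝ (Fin (m + 1))))
          ≤ ENNReal.ofReal ε) →
        Homotopic g₁ g₂ := by
  have hfinm := sph_finite n
  obtain ⟨c₀, hc₀, hball⟩ := sph_lower n
  set μ : Measure (Sph n) := μH[(n : ℝ)] with hμ
  set p : ℝ := (n : ℝ) / s with hpdef
  have hn' : (1 : ℝ) ≤ n := by exact_mod_cast hn
  have hp : 1 ≤ p := by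
    rw [hpdef, le_div_iff₀ hs]; linarith
  have hp0 : 0 < p := by linarith
  have hq : (n : ℝ) + s * p = ((2 * n : ℕ) : ℝ) := by
    rw [hpdef, mul_div_cancel₀ _ hs.ne']; push_cast; ring
  set c : ℝ := (1/2) * (c₀ * (1/2) ^ n) with hc
  have hcpos : 0 < c := by positivity
  set K : ℝ := c ^ 2 / (8 * 4 ^ n) with hK
  have hKpos : 0 < K := by positivity
  have hKc : 2 * 4 ^ n * K ≤ c ^ 2 / 4 := by
    rw [hK]; apply le_of_eq; field_simp; norm_num
  set κ : ℝ := K / (2 * 2 ^ p) with hκ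
  have hκpos : 0 < κ := by positivity
  have hKκ : K = 2 ^ p * (2 * κ) := by rw [hκ]; field_simp
  set v : Sph n → EE (m+1) := fun x => (u x : EE (m+1)) with hv
  have hvm : Measurable v := measurable_subtype_coe.comp hu
  have hvfin : ∫⁻ z, ENNReal.ofReal (‖v z.1 - v z.2‖ ^ p / dist z.1 z.2 ^ ((n : ℝ) + s * p))
      ∂(μ.prod μ) ≠ ⊤ := by
    rw [gag_eq n m s p v hvm] at huW
    intro h
    rw [h, ENNReal.top_rpow_of_pos (by positivity)] at huW
    exact lt_irrefl _ huW
  obtain ⟨δ, hδ, hKu⟩ := near_small μ v hvm hp hvfin hκpos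
  set t₀ : ℝ := min (δ / 2) 1 with ht₀
  have ht₀pos : 0 < t₀ := lt_min (by positivity) one_pos
  have hWlow : ∀ (x : Sph n) (t : ℝ), 0 < t → t ≤ t₀ → c * t ^ n ≤ ∫ y, wt t x y ∂μ := by
    intro x t ht htt
    have ht1 : t ≤ 1 := htt.trans (min_le_right _ _)
    refine le_trans ?_ (WW_lower μ ht x)
    have h1 := hball x (t/2) (by positivity) (by linarith)
    have h2 : c₀ * (t/2) ^ n ≤ μ.real (Metric.ball x (t/2)) :=
      (ENNReal.ofReal_le_iff_le_toReal (measure_ne_top _ _)).1 h1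
    have h3 : c * t ^ n = (1/2) * (c₀ * (t/2) ^ n) := by
      rw [hc, div_pow, div_pow]; ring
    rw [h3]; linarith
  have hpos : ∀ x : Sph n, ∀ r, 0 < r → 0 < μ (Metric.ball x r) := by
    intro x r hr
    have h1 := hball x (min r 1) (lt_min hr one_pos) (min_le_right _ _)
    have hr' : 0 < min r 1 := lt_min hr one_pos
    refine lt_of_lt_of_le (ENNReal.ofReal_pos.2 (by positivity)) (h1.trans ?_)
    exact measure_mono (Metric.ball_subset_ball (min_le_left _ _))
  set ε : ℝ := min (κ ^ (1 / p)) (c * t₀ ^ n / 8) with hε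
  have hεpos : 0 < ε := lt_min (by positivity) (by positivity)
  refine ⟨ε, hεpos, ?_⟩
  intro g₁ g₂ hg₁ hg₂ h₁ h₂
  have main : ∀ g : Sph n → Sph m, Continuous g →
      sphGagliardo n m s p (fun x => v x - (g x : EE (m+1))) ≤ ENNReal.ofReal ε →
      ∀ x t, 0 < t → t ≤ t₀ → c * t ^ n / 2 ≤ ‖GG μ (fun y => (g y : EE (m+1))) t x‖ := by
    intro g hg hG x t ht htt
    have hgc : Continuous (fun x => (g x : EE (m+1))) := by fun_prop
    rw [gag_eq n m s p (fun x => v x - (g x : EE (m+1))) (hvm.sub hgc.measurable), one_div, ENNReal.rpow_inv_le_iff hp0] at hG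
    refine GG_lower n m hp hq hcpos ?_ ht hκpos.le hKκ hKc μ v _ hvm hgc (fun x => by simp) hKu
      (hG.trans ?_) x (hWlow x t ht htt)
    · have := htt.trans (min_le_left _ _)
      linarith
    · rw [ENNReal.ofReal_rpow_of_pos hεpos]
      refine ENNReal.ofReal_le_ofReal ?_
      calc ε ^ p ≤ (κ ^ (1 / p)) ^ p := Real.rpow_le_rpow hεpos.le (min_le_left _ _) hp0.le
        _ = κ := by rw [← Real.rpow_mul hκpos.le, one_div_mul_cancel hp0.ne', Real.rpow_one]
  have m₁ := main g₁ hg₁ (le_add_self.trans h₁)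
  have m₂ := main g₂ hg₂ (le_add_self.trans h₂)
  have ne_of : ∀ (g : Sph n → Sph m), (∀ x t, 0 < t → t ≤ t₀ →
      c * t ^ n / 2 ≤ ‖GG μ (fun y => (g y : EE (m+1))) t x‖) →
      ∀ x t, 0 < t → t ≤ t₀ → GG μ (fun y => (g y : EE (m+1))) t x ≠ 0 := by
    intro g h x t ht htt h0
    have := h x t ht htt
    rw [h0, norm_zero] at this
    have : 0 < c * t ^ n / 2 := by positivity
    linarith
  obtain ⟨t₁, ht₁, ht₁', H₁⟩ := GG_small μ g₁ hg₁ ht₀pos hpos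
  obtain ⟨t₂, ht₂, ht₂', H₂⟩ := GG_small μ g₂ hg₂ ht₀pos hpos
  have S₁ := GG_scales μ g₁ hg₁ ht₁ ht₁' (ne_of g₁ m₁)
  have S₂ := GG_scales μ g₂ hg₂ ht₂ ht₂' (ne_of g₂ m₂)
  have hgc₁ : Continuous (fun x => (g₁ x : EE (m+1))) := by fun_prop
  have hgc₂ : Continuous (fun x => (g₂ x : EE (m+1))) := by fun_prop
  have hl1 : ∫ y, ‖(g₁ y : EE (m+1)) - (g₂ y : EE (m+1))‖ ∂μ ≤ 2 * ε := by
    rw [← ENNReal.ofReal_le_ofReal_iff (by positivity), ofReal_integral_eq_lintegral_ofReal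
      (integ μ (by fun_prop)) (Filter.Eventually.of_forall fun z => norm_nonneg _)]
    calc _ ≤ ∫⁻ x, (ENNReal.ofReal ‖v x - (g₁ x : EE (m+1))‖
          + ENNReal.ofReal ‖v x - (g₂ x : EE (m+1))‖) ∂μ := by
          refine lintegral_mono fun x => ?_
          rw [← ENNReal.ofReal_add (norm_nonneg _) (norm_nonneg _)]
          refine ENNReal.ofReal_le_ofReal ?_
          have := norm_sub_le (v x - (g₂ x : EE (m+1))) (v x - (g₁ x : EE (m+1)))
          rw [sub_sub_sub_cancel_left] at this
          linarith
      _ = ∫⁻ x, ENNReal.ofReal ‖v x - (g₁ x : EE (m+1))‖ ∂μ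
          + ∫⁻ x, ENNReal.ofReal ‖v x - (g₂ x : EE (m+1))‖ ∂μ := by
          refine lintegral_add_right _ ?_
          exact ENNReal.measurable_ofReal.comp (hvm.sub hgc₂.measurable).norm
      _ ≤ ENNReal.ofReal ε + ENNReal.ofReal ε :=
          add_le_add (le_self_add.trans h₁) (le_self_add.trans h₂)
      _ = ENNReal.ofReal (2 * ε) := by
          rw [← ENNReal.ofReal_add hεpos.le hεpos.le, two_mul]
  have hdiff : ∀ x, ‖GG μ (fun y => (g₂ y : EE (m+1))) t₀ x - GG μ (fun y => (g₁ y : EE (m+1))) t₀ x‖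
      ≤ 2 * ε := by
    intro x
    have hw := wt_cont t₀ x
    rw [GG, GG, ← integral_sub (integ μ (by fun_prop)) (integ μ (by fun_prop))]
    refine (norm_integral_le_integral_norm _).trans (le_trans ?_ hl1)
    refine integral_mono (integ μ (by fun_prop)) (integ μ (by fun_prop)) ?_
    intro y
    simp only
    rw [← smul_sub, norm_smul, norm_sub_rev, Real.norm_eq_abs, abs_of_nonneg (wt_nonneg _ _ _)]
    exact mul_le_of_le_one_left (norm_nonneg _) (wt_le_one ht₀pos _ _)
  have M : Homotopic (fun x => nz m (GG μ (fun y => (g₁ y : EE (m+1))) t₀ x))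
      (fun x => nz m (GG μ (fun y => (g₂ y : EE (m+1))) t₀ x)) := by
    refine homotopic_line m _ _
      (GG_cont μ _ hgc₁ (fun x => by simp) (fun _ => t₀) (fun x => x) continuous_const
        continuous_id fun _ => ht₀pos)
      (GG_cont μ _ hgc₂ (fun x => by simp) (fun _ => t₀) (fun x => x) continuous_const
        continuous_id fun _ => ht₀pos) ?_
    intro x τ h0 h1 hz
    have a1 := m₁ x t₀ ht₀pos le_rfl
    have a2 := hdiff x
    set A := GG μ (fun y => (g₁ y : EE (m+1))) t₀ x
    set B := GG μ (fun y => (g₂ y : EE (m+1))) t₀ x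
    have e : A = -(τ • (B - A)) := by
      have : A + τ • (B - A) = 0 := by rw [← hz]; module
      exact eq_neg_of_add_eq_zero_left this
    have hA : ‖A‖ ≤ ‖B - A‖ := by
      conv_lhs => rw [e]
      rw [norm_neg, norm_smul, Real.norm_eq_abs, abs_of_nonneg h0]
      exact mul_le_of_le_one_left (norm_nonneg _) h1
    have hε8 : ε ≤ c * t₀ ^ n / 8 := min_le_right _ _
    have : 0 < c * t₀ ^ n := by positivity
    linarith
  exact ((H₁.trans' S₁).trans' M).trans' ((H₂.trans' S₂).symm')
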